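/- Assume βn/k² ≥ 10 and that for some r ∈ [k] one has λ_r − λ_{r+1} > 16 · max{ ‖E‖, √(k²/(βn)) · λ_{r+1} } (with λ_{k+1} := 0 when needed). Then for every i ∈ [n], ‖Û_{1:r} Û_{1:r}ᵀ − Û_{−i,1:r} Û_{−i,1:r}ᵀ‖_F ≤ (128 · max{‖E‖, √(k²/(βn)) λ_{r+1}} / (λ_r − λ_{r+1})) · ( √(kr/(βn)) + ‖Û_{−i,1:r} Û_{−i,1:r}ᵀ ε_i‖ / λ_r ). -/

import Mathlib

open Matrix MeasureTheory ProbabilityTheory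
open scoped BigOperators ENNReal NNReal

noncomputable section

/-- Euclidean norm of a vector in `Fin p → ℝ`. -/
def vnorm {p : ℕ} (x : Fin p → ℝ) : ℝ := Real.sqrt (∑ i, (x i) ^ 2)

/-- Frobenius norm of a real matrix. -/
def fnorm {m n : ℕ} (A : Matrix (Fin m) (Fin n) ℝ) : ℝ :=
  Real.sqrt (∑ i, ∑ j, (A i j) ^ 2)

/-- Operator (spectral) norm of a real matrix. -/
def opnorm {m n : ℕ} (A : Matrix (Fin m) (Fin n) ℝ) : ℝ :=
  ‖LinearMap.toContinuousLinearMap (Matrix.toEuclideanLin A)‖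

/-- A (full) singular value decomposition of a real `p × n` matrix `A`:
`A = U D Vᵀ` with `U, V` orthogonal and `D` the rectangular diagonal matrix with the
nonincreasing nonnegative singular values `sv 0 ≥ sv 1 ≥ ⋯` on the diagonal
(0-indexed, so the math `σ_i` is `sv (i-1)`), extended by zero beyond `min p n`. -/
structure SVDData (p n : ℕ) (A : Matrix (Fin p) (Fin n) ℝ) where
  U : Matrix (Fin p) (Fin p) ℝ
  V : Matrix (Fin n) (Fin n) ℝ
  sv : ℕ → ℝ
  hU : Uᵀ * U = 1
  hV : Vᵀ * V = 1
  sv_anti : ∀ i j : ℕ, i ≤ j → sv j ≤ sv i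
  sv_nonneg : ∀ i, 0 ≤ sv i
  sv_zero : ∀ j, min p n ≤ j → sv j = 0
  decomp : A = U * (Matrix.of fun (i : Fin p) (j : Fin n) => if (i : ℕ) = (j : ℕ) then sv (i : ℕ) else 0) * Vᵀ

/-- Projection matrix `U_{1:r} U_{1:r}ᵀ` onto the span of the first `r` columns of `U`. -/
def projr {p : ℕ} (U : Matrix (Fin p) (Fin p) ℝ) (r : ℕ) : Matrix (Fin p) (Fin p) ℝ :=
  Matrix.of fun i j => ∑ l : Fin p, if (l : ℕ) < r then U i l * U j l else 0

/-- The `l`-th (0-indexed) column of a matrix, as a vector. -/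
def matCol {p q : ℕ} (U : Matrix (Fin p) (Fin q) ℝ) (l : ℕ) : Fin p → ℝ :=
  fun i => if h : l < q then U i ⟨l, h⟩ else 0

/-- `β` for a cluster assignment: `(k/n) ·` (size of the smallest cluster),
so that `β·n/k` is the size of the smallest cluster. -/
def betaMin (n k : ℕ) (z : Fin n → Fin k) : ℝ :=
  ((k : ℝ) / n) * ⨅ a : Fin k, ((Finset.univ.filter fun i => z i = a).card : ℝ)

/-- Minimum pairwise distance between the centers. -/
def Delta {p k : ℕ} (θ : Fin k → Fin p → ℝ) : ℝ :=
  ⨅ q : {q : Fin k × Fin k // q.1 ≠ q.2}, vnorm (fun i => θ q.1.1 i - θ q.1.2 i)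

/-- Misclustering error `ℓ(z, z*)`. -/
def miscl {n k : ℕ} (z zs : Fin n → Fin k) : ℝ :=
  (⨅ φ : Equiv.Perm (Fin k), ((Finset.univ.filter fun i => z i ≠ φ (zs i)).card : ℝ)) / n

/-- `(z, c)` is a global minimizer of the k-means objective for the columns of `W * X`. -/
def IsKMeans {p n k : ℕ} (W : Matrix (Fin p) (Fin p) ℝ) (X : Matrix (Fin p) (Fin n) ℝ)
    (z : Fin n → Fin k) (c : Fin k → Fin p → ℝ) : Prop :=
  ∀ (z' : Fin n → Fin k) (c' : Fin k → Fin p → ℝ),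
    ∑ i, ∑ a, (W.mulVec (fun b => X b i) a - c (z i) a) ^ 2 ≤
      ∑ i, ∑ a, (W.mulVec (fun b => X b i) a - c' (z' i) a) ^ 2

/-!
Write `Y = X_{-i}`, `y = X_i` and `Π = Û_{-i,1:r} Û_{-i,1:r}ᵀ`. Since `X Xᵀ = Y Yᵀ + y yᵀ`, the left
singular pairs `(σ_j, u_j)` of `Y` and `(τ_l, w_l)` of `X` satisfy
`(τ_l² - σ_j²) ⟨w_l, u_j⟩ = ⟨w_l, y⟩ ⟨u_j, y⟩`. The Frobenius distance of the two projections is `√2`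
times the norm of the overlaps `⟨w_l, u_j⟩` with `j ≤ r < l`. For such `l`, `|⟨w_l, y⟩|` is at most
`|⟨w_l, (1 - Π) y⟩|`, so these overlaps are dominated by the rank-one matrix with entries
`|⟨w_l, (1 - Π) y⟩| |⟨u_j, y⟩| / σ_j`, divided by the spectral gap of `Y`.

The mixture structure enters only through leverage: `P_i` is repeated at least `βn/k` times among
the columns of `P`, so `⟨P_i, x⟩² ≤ (k/(βn)) ‖Pᵀ x‖²` for every `x`. Hence deleting column `i` hardly
moves the singular values, and testing this inequality at suitable `x` shows that `(1 - Π) P_i` is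
of the order of the noise while `P_i`, rescaled by the inverse leading singular values of `Y`, has
norm of order `√(k/(βn))`.
-/

section Norms

variable {m n : ℕ}

lemma vnorm_eq_norm_toLp (x : Fin n → ℝ) : vnorm x = ‖WithLp.toLp 2 x‖ := by
  simp [vnorm, EuclideanSpace.norm_eq]

lemma vnorm_nonneg (x : Fin n → ℝ) : 0 ≤ vnorm x := Real.sqrt_nonneg _

lemma vnorm_sq (x : Fin n → ℝ) : vnorm x ^ 2 = ∑ i, x i ^ 2 := Real.sq_sqrt (by positivity)

lemma vnorm_sq_eq_dotProduct (x : Fin n → ℝ) : vnorm x ^ 2 = x ⬝ᵥ x := by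
  rw [vnorm_sq]
  simp only [dotProduct, sq]

lemma vnorm_add_le (x y : Fin n → ℝ) : vnorm (x + y) ≤ vnorm x + vnorm y := by
  simp only [vnorm_eq_norm_toLp, WithLp.toLp_add]
  exact norm_add_le _ _

lemma vnorm_le_vnorm_add_add (x y : Fin n → ℝ) : vnorm x ≤ vnorm (x + y) + vnorm y := by
  simp only [vnorm_eq_norm_toLp, WithLp.toLp_add]
  exact norm_le_add_norm_add _ _

lemma exists_smul_vnorm_eq_one {x : Fin n → ℝ} (hx : x ≠ 0) : ∃ c : ℝ, vnorm (c • x) = 1 := by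
  have hx' : WithLp.toLp 2 x ≠ 0 := fun h => hx (by simpa using h)
  refine ⟨‖WithLp.toLp 2 x‖⁻¹, ?_⟩
  rw [vnorm_eq_norm_toLp, WithLp.toLp_smul, norm_smul, norm_inv, norm_norm,
    inv_mul_cancel₀ (norm_ne_zero_iff.2 hx')]

lemma vnorm_le_mul_vnorm {x y : Fin n → ℝ} {c : ℝ} (hc : 0 ≤ c) (h : ∀ i, |x i| ≤ c * |y i|) :
    vnorm x ≤ c * vnorm y := by
  refine (sq_le_sq₀ (vnorm_nonneg x) (mul_nonneg hc (vnorm_nonneg y))).1 ?_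
  rw [mul_pow, vnorm_sq, vnorm_sq, Finset.mul_sum]
  refine Finset.sum_le_sum fun i _ => ?_
  rw [← sq_abs (x i), ← sq_abs (y i), ← mul_pow]
  exact pow_le_pow_left₀ (abs_nonneg _) (h i) 2

lemma abs_dotProduct_le (x y : Fin n → ℝ) : |x ⬝ᵥ y| ≤ vnorm x * vnorm y := by
  simpa only [vnorm_eq_norm_toLp, EuclideanSpace.inner_toLp_toLp, star_trivial, dotProduct_comm y]
    using abs_real_inner_le_norm (WithLp.toLp 2 x) (WithLp.toLp 2 y)

lemma dotProduct_le_vnorm_mul_vnorm (x y : Fin n → ℝ) : x ⬝ᵥ y ≤ vnorm x * vnorm y :=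
  (le_abs_self _).trans (abs_dotProduct_le x y)

lemma opnorm_nonneg (A : Matrix (Fin m) (Fin n) ℝ) : 0 ≤ opnorm A := norm_nonneg _

open scoped Matrix.Norms.L2Operator in
lemma opnorm_transpose (A : Matrix (Fin m) (Fin n) ℝ) : opnorm Aᵀ = opnorm A := by
  have h := l2_opNorm_conjTranspose A
  rwa [conjTranspose_eq_transpose_of_trivial] at h

lemma vnorm_mulVec_le_opnorm_mul (A : Matrix (Fin m) (Fin n) ℝ) (x : Fin n → ℝ) :
    vnorm (A *ᵥ x) ≤ opnorm A * vnorm x := by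
  simp only [vnorm_eq_norm_toLp]
  exact (LinearMap.toContinuousLinearMap (toEuclideanLin A)).le_opNorm (WithLp.toLp 2 x)

lemma vnorm_col_le_opnorm (A : Matrix (Fin m) (Fin n) ℝ) (i : Fin n) :
    vnorm (A.col i) ≤ opnorm A := by
  have h := vnorm_mulVec_le_opnorm_mul A (Pi.single i 1)
  rwa [mulVec_single_one, vnorm_eq_norm_toLp (Pi.single i 1), PiLp.toLp_single,
    PiLp.norm_single, norm_one, mul_one] at h

lemma vnorm_mulVec_of_transpose_mul_self {U : Matrix (Fin m) (Fin n) ℝ} (hU : Uᵀ * U = 1)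
    (x : Fin n → ℝ) : vnorm (U *ᵥ x) = vnorm x := by
  refine (sq_eq_sq₀ (vnorm_nonneg _) (vnorm_nonneg _)).1 ?_
  rw [vnorm_sq_eq_dotProduct, vnorm_sq_eq_dotProduct, ← dotProduct_transpose_mulVec,
    mulVec_mulVec, hU, one_mulVec]

lemma vnorm_transpose_mulVec_sq (A : Matrix (Fin m) (Fin n) ℝ) (x : Fin m → ℝ) :
    vnorm (Aᵀ *ᵥ x) ^ 2 = x ⬝ᵥ ((A * Aᵀ) *ᵥ x) := by
  rw [vnorm_sq_eq_dotProduct, dotProduct_transpose_mulVec, mulVec_mulVec]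

lemma vnorm_mulVec_le_of_isIdempotentElem {Q : Matrix (Fin n) (Fin n) ℝ} (hQ : Qᵀ = Q)
    (hQQ : IsIdempotentElem Q) (x : Fin n → ℝ) : vnorm (Q *ᵥ x) ≤ vnorm x := by
  have hsq : vnorm (Q *ᵥ x) ^ 2 ≤ vnorm x * vnorm (Q *ᵥ x) :=
    calc vnorm (Q *ᵥ x) ^ 2 = x ⬝ᵥ (Q *ᵥ x) := by
          conv_lhs => rw [← hQ, vnorm_transpose_mulVec_sq, hQ, hQQ]
      _ ≤ vnorm x * vnorm (Q *ᵥ x) := dotProduct_le_vnorm_mul_vnorm _ _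
  nlinarith [vnorm_nonneg x, vnorm_nonneg (Q *ᵥ x)]

-- Test the hypothesis on `θ` at `x = Bᵀ B θ`, where `θ ⬝ᵥ x = ‖B θ‖ ^ 2`.
lemma mul_vnorm_mulVec_le_of_forall {θ : Fin n → ℝ} {f : (Fin n → ℝ) → ℝ} {c K : ℝ}
    (B : Matrix (Fin m) (Fin n) ℝ) (hθ : ∀ x, c * (θ ⬝ᵥ x) ≤ f x)
    (hB : ∀ v, f (Bᵀ *ᵥ v) ≤ K * vnorm v) (hK : 0 ≤ K) : c * vnorm (B *ᵥ θ) ≤ K := by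
  have htest : c * vnorm (B *ᵥ θ) ^ 2 ≤ K * vnorm (B *ᵥ θ) :=
    calc c * vnorm (B *ᵥ θ) ^ 2 = c * (θ ⬝ᵥ (Bᵀ *ᵥ (B *ᵥ θ))) := by
          rw [dotProduct_transpose_mulVec, vnorm_sq_eq_dotProduct]
      _ ≤ f (Bᵀ *ᵥ (B *ᵥ θ)) := hθ _
      _ ≤ K * vnorm (B *ᵥ θ) := hB _
  rcases (vnorm_nonneg (B *ᵥ θ)).eq_or_lt with h | h
  · simpa only [← h, mul_zero] using hK
  · exact le_of_mul_le_mul_right (by linarith) h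

lemma fnorm_nonneg (A : Matrix (Fin m) (Fin n) ℝ) : 0 ≤ fnorm A := Real.sqrt_nonneg _

lemma fnorm_sq (A : Matrix (Fin m) (Fin n) ℝ) : fnorm A ^ 2 = ∑ i, ∑ j, A i j ^ 2 :=
  Real.sq_sqrt (by positivity)

lemma fnorm_sq_eq_trace (A : Matrix (Fin m) (Fin n) ℝ) : fnorm A ^ 2 = (Aᵀ * A).trace := by
  rw [fnorm_sq, Finset.sum_comm]
  simp only [trace, diag_apply, mul_apply, transpose_apply, sq]

lemma fnorm_transpose_mul_mul {W : Matrix (Fin m) (Fin m) ℝ} {U : Matrix (Fin n) (Fin n) ℝ}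
    (hW : Wᵀ * W = 1) (hU : Uᵀ * U = 1) (A : Matrix (Fin m) (Fin n) ℝ) :
    fnorm (Wᵀ * A * U) = fnorm A := by
  refine (sq_eq_sq₀ (fnorm_nonneg _) (fnorm_nonneg _)).1 ?_
  rw [fnorm_sq_eq_trace, fnorm_sq_eq_trace]
  calc ((Wᵀ * A * U)ᵀ * (Wᵀ * A * U)).trace
      = (Uᵀ * (Aᵀ * (W * Wᵀ) * A * U)).trace := by
        simp only [transpose_mul, transpose_transpose, Matrix.mul_assoc]
    _ = (Aᵀ * A).trace := by
        rw [mul_eq_one_comm.1 hW, trace_mul_comm, Matrix.mul_one, Matrix.mul_assoc _ U,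
          mul_eq_one_comm.1 hU, Matrix.mul_one]

lemma mul_fnorm_le_of_forall_abs_le {A : Matrix (Fin m) (Fin n) ℝ} {c : ℝ} (hc : 0 ≤ c)
    {u : Fin m → ℝ} {v : Fin n → ℝ} (h : ∀ i j, c * |A i j| ≤ |u i| * |v j|) :
    c * fnorm A ≤ vnorm u * vnorm v := by
  refine (sq_le_sq₀ (mul_nonneg hc (fnorm_nonneg A))
    (mul_nonneg (vnorm_nonneg u) (vnorm_nonneg v))).1 ?_
  rw [mul_pow, mul_pow, fnorm_sq, vnorm_sq, vnorm_sq, Finset.sum_mul_sum, Finset.mul_sum]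
  refine Finset.sum_le_sum fun i _ => ?_
  rw [Finset.mul_sum]
  refine Finset.sum_le_sum fun j _ => ?_
  rw [← sq_abs (A i j), ← sq_abs (u i), ← sq_abs (v j), ← mul_pow, ← mul_pow]
  exact pow_le_pow_left₀ (mul_nonneg hc (abs_nonneg _)) (h i j) 2

lemma fnorm_sub_sq_of_isIdempotentElem {P Q : Matrix (Fin n) (Fin n) ℝ} (hP : Pᵀ = P)
    (hQ : Qᵀ = Q) (hPP : IsIdempotentElem P) (hQQ : IsIdempotentElem Q)
    (htr : P.trace = Q.trace) : fnorm (P - Q) ^ 2 = 2 * fnorm ((1 - P) * Q) ^ 2 := by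
  have hQPQ : (Q * P * Q).trace = (P * Q).trace := by
    rw [trace_mul_comm, ← Matrix.mul_assoc, hQQ.eq, trace_mul_comm]
  have hleft : (P - Q)ᵀ * (P - Q) = P - P * Q - Q * P + Q := by
    rw [transpose_sub, hP, hQ, Matrix.sub_mul, Matrix.mul_sub, Matrix.mul_sub, hPP.eq, hQQ.eq]
    abel
  have hright : ((1 - P) * Q)ᵀ * ((1 - P) * Q) = Q - Q * P * Q := by
    rw [transpose_mul, transpose_sub, transpose_one, hP, hQ, Matrix.mul_assoc,
      ← Matrix.mul_assoc (1 - P), hPP.one_sub.eq, Matrix.sub_mul, Matrix.one_mul, Matrix.mul_sub,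
      hQQ.eq, Matrix.mul_assoc]
  rw [fnorm_sq_eq_trace, fnorm_sq_eq_trace, hleft, hright, trace_add, trace_sub, trace_sub,
    trace_sub, hQPQ, trace_mul_comm Q P, htr]
  ring

end Norms

section LeadingProjection

variable {p : ℕ}

/-- The orthogonal projection onto the span of the first `r` coordinate vectors of `Fin p → ℝ`;
`projr U r` is its conjugate by `U`. -/
def coordProj (p r : ℕ) : Matrix (Fin p) (Fin p) ℝ :=
  diagonal fun l => if (l : ℕ) < r then 1 else 0

lemma coordProj_mulVec_apply (r : ℕ) (x : Fin p → ℝ) (l : Fin p) :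
    (coordProj p r *ᵥ x) l = if (l : ℕ) < r then x l else 0 := by
  rw [coordProj, mulVec_diagonal, ite_mul, one_mul, zero_mul]

lemma isIdempotentElem_coordProj (p r : ℕ) : IsIdempotentElem (coordProj p r) := by
  simp [IsIdempotentElem, coordProj]

lemma projr_eq_mul_coordProj_mul (U : Matrix (Fin p) (Fin p) ℝ) (r : ℕ) :
    projr U r = U * coordProj p r * Uᵀ := by
  ext a b
  rw [mul_apply]
  simp only [projr, of_apply, coordProj, mul_diagonal, transpose_apply, mul_ite, mul_one, mul_zero,
    ite_mul, zero_mul]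

lemma transpose_projr (U : Matrix (Fin p) (Fin p) ℝ) (r : ℕ) : (projr U r)ᵀ = projr U r := by
  simp only [projr_eq_mul_coordProj_mul, coordProj, transpose_mul, transpose_transpose,
    diagonal_transpose, Matrix.mul_assoc]

lemma transpose_one_sub_projr (U : Matrix (Fin p) (Fin p) ℝ) (r : ℕ) :
    (1 - projr U r)ᵀ = 1 - projr U r := by
  rw [transpose_sub, transpose_one, transpose_projr]

variable {U : Matrix (Fin p) (Fin p) ℝ}

lemma transpose_mul_projr (hU : Uᵀ * U = 1) (r : ℕ) :
    Uᵀ * projr U r = coordProj p r * Uᵀ := by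
  rw [projr_eq_mul_coordProj_mul, ← Matrix.mul_assoc, ← Matrix.mul_assoc, hU, Matrix.one_mul]

lemma projr_mul (hU : Uᵀ * U = 1) (r : ℕ) : projr U r * U = U * coordProj p r := by
  rw [projr_eq_mul_coordProj_mul, Matrix.mul_assoc, hU, Matrix.mul_one]

lemma isIdempotentElem_projr (hU : Uᵀ * U = 1) (r : ℕ) : IsIdempotentElem (projr U r) := by
  rw [IsIdempotentElem]
  nth_rw 2 [projr_eq_mul_coordProj_mul]
  rw [← Matrix.mul_assoc, ← Matrix.mul_assoc, projr_mul hU, Matrix.mul_assoc U,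
    (isIdempotentElem_coordProj p r).eq, ← projr_eq_mul_coordProj_mul]

lemma trace_projr (hU : Uᵀ * U = 1) (r : ℕ) : (projr U r).trace = (coordProj p r).trace := by
  rw [projr_eq_mul_coordProj_mul, trace_mul_cycle, hU, Matrix.one_mul]

lemma transpose_mulVec_projr_mulVec_apply (hU : Uᵀ * U = 1) (r : ℕ) (x : Fin p → ℝ) (l : Fin p) :
    (Uᵀ *ᵥ (projr U r *ᵥ x)) l = if (l : ℕ) < r then (Uᵀ *ᵥ x) l else 0 := by
  rw [mulVec_mulVec, transpose_mul_projr hU, ← mulVec_mulVec, coordProj_mulVec_apply]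

lemma vnorm_projr_mulVec (hU : Uᵀ * U = 1) (r : ℕ) (x : Fin p → ℝ) :
    vnorm (projr U r *ᵥ x) = vnorm (coordProj p r *ᵥ (Uᵀ *ᵥ x)) := by
  rw [projr_eq_mul_coordProj_mul, ← mulVec_mulVec, ← mulVec_mulVec,
    vnorm_mulVec_of_transpose_mul_self hU]

lemma projr_mulVec_eq_zero {r : ℕ} {x : Fin p → ℝ}
    (hx : ∀ l : Fin p, (l : ℕ) < r → (Uᵀ *ᵥ x) l = 0) : projr U r *ᵥ x = 0 := by
  have hcoord : coordProj p r *ᵥ (Uᵀ *ᵥ x) = 0 := by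
    ext l
    rw [coordProj_mulVec_apply]
    split_ifs with hl
    exacts [hx l hl, rfl]
  rw [projr_eq_mul_coordProj_mul, ← mulVec_mulVec, ← mulVec_mulVec, hcoord, mulVec_zero]

lemma projr_mulVec_one_sub_projr_mulVec (hU : Uᵀ * U = 1) (r : ℕ) (x : Fin p → ℝ) :
    projr U r *ᵥ ((1 - projr U r) *ᵥ x) = 0 := by
  rw [mulVec_mulVec, (isIdempotentElem_projr hU r).mul_one_sub_self, zero_mulVec]

lemma vnorm_one_sub_projr_mulVec_le (hU : Uᵀ * U = 1) (r : ℕ) (x : Fin p → ℝ) :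
    vnorm ((1 - projr U r) *ᵥ x) ≤ vnorm x :=
  vnorm_mulVec_le_of_isIdempotentElem (transpose_one_sub_projr U r)
    (isIdempotentElem_projr hU r).one_sub x

lemma transpose_mul_one_sub_projr_mul_projr_mul_apply {W : Matrix (Fin p) (Fin p) ℝ}
    (hW : Wᵀ * W = 1) (hU : Uᵀ * U = 1) (r : ℕ) (l j : Fin p) :
    (Wᵀ * ((1 - projr W r) * projr U r) * U) l j =
      if (l : ℕ) < r then 0 else if (j : ℕ) < r then (Wᵀ * U) l j else 0 := by
  have hconj : Wᵀ * ((1 - projr W r) * projr U r) * U =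
      (1 - coordProj p r) * (Wᵀ * U * coordProj p r) := by
    rw [Matrix.mul_assoc, Matrix.mul_assoc _ (projr U r), projr_mul hU, ← Matrix.mul_assoc,
      Matrix.mul_sub, transpose_mul_projr hW, Matrix.sub_mul, Matrix.sub_mul]
    simp only [Matrix.mul_one, Matrix.one_mul, Matrix.mul_assoc]
  rw [hconj, Matrix.sub_mul, Matrix.one_mul]
  simp only [Matrix.sub_apply, coordProj, diagonal_mul, mul_diagonal]
  split_ifs <;> ring

lemma fnorm_projr_sub_projr {W : Matrix (Fin p) (Fin p) ℝ} (hW : Wᵀ * W = 1) (hU : Uᵀ * U = 1)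
    (r : ℕ) : fnorm (projr W r - projr U r) =
      √2 * fnorm (Wᵀ * ((1 - projr W r) * projr U r) * U) := by
  refine (sq_eq_sq₀ (fnorm_nonneg _) (mul_nonneg (Real.sqrt_nonneg 2) (fnorm_nonneg _))).1 ?_
  rw [fnorm_transpose_mul_mul hW hU, mul_pow, Real.sq_sqrt zero_le_two]
  exact fnorm_sub_sq_of_isIdempotentElem (transpose_projr W r) (transpose_projr U r)
    (isIdempotentElem_projr hW r) (isIdempotentElem_projr hU r)
    ((trace_projr hW r).trans (trace_projr hU r).symm)

end LeadingProjection

section SingularValues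

variable {m n p : ℕ}

lemma mul_transpose_of_ite_val_eq {s : ℕ → ℝ} (hs : ∀ j, n ≤ j → s j = 0) :
    (of fun (i : Fin p) (j : Fin n) => if (i : ℕ) = (j : ℕ) then s i else 0) *
        (of fun (i : Fin p) (j : Fin n) => if (i : ℕ) = (j : ℕ) then s i else 0)ᵀ =
      diagonal fun l : Fin p => s l ^ 2 := by
  ext l l'
  simp only [mul_apply, transpose_apply, of_apply, diagonal_apply, ite_mul, zero_mul]
  rcases lt_or_ge (l : ℕ) n with hl | hl
  · have hval : ∀ j : Fin n, (l : ℕ) = j ↔ (⟨l, hl⟩ : Fin n) = j := fun j => by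
      rw [Fin.ext_iff]
    simp only [hval, Finset.sum_ite_eq, Finset.mem_univ, if_true, mul_ite, mul_zero]
    by_cases h : l = l'
    · subst h
      simp only [if_true, sq]
    · rw [if_neg h, if_neg fun h' => h (Fin.ext h'.symm)]
  · simp only [hs l hl, zero_mul, ite_self, Finset.sum_const_zero, zero_pow two_ne_zero]

lemma exists_vnorm_eq_one_mulVec_apply_eq_zero (U W : Matrix (Fin p) (Fin p) ℝ) (j : Fin p) :
    ∃ x, vnorm x = 1 ∧ (∀ l < j, (U *ᵥ x) l = 0) ∧ ∀ l, j < l → (W *ᵥ x) l = 0 := by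
  let C : Matrix (Fin p) (Fin p) ℝ :=
    of fun l => if l < j then U l else if j < l then W l else 0
  have hdet : C.det = 0 := det_eq_zero_of_row_eq_zero j fun i => by
    simp only [C, of_apply, lt_irrefl, if_false, Pi.zero_apply]
  obtain ⟨x, hx, hCx⟩ := exists_mulVec_eq_zero_iff.2 hdet
  obtain ⟨c, hc⟩ := exists_smul_vnorm_eq_one hx
  have hrow : ∀ l, (C *ᵥ (c • x)) l = 0 := fun l => by
    rw [mulVec_smul, hCx, smul_zero, Pi.zero_apply]
  refine ⟨c • x, hc, fun l hl => ?_, fun l hl => ?_⟩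
  · simpa only [C, mulVec, of_apply, if_pos hl] using hrow l
  · simpa only [C, mulVec, of_apply, if_pos hl, if_neg hl.not_gt] using hrow l

namespace SVDData

variable {A : Matrix (Fin p) (Fin n) ℝ} (D : SVDData p n A)

lemma vnorm_U_transpose_mulVec (x : Fin p → ℝ) : vnorm (D.Uᵀ *ᵥ x) = vnorm x :=
  vnorm_mulVec_of_transpose_mul_self (by rw [transpose_transpose, mul_eq_one_comm.1 D.hU]) x

lemma mul_transpose_eq : A * Aᵀ = D.U * diagonal (fun l : Fin p => D.sv l ^ 2) * D.Uᵀ := by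
  rw [← mul_transpose_of_ite_val_eq fun j hj => D.sv_zero j ((min_le_right p n).trans hj)]
  nth_rw 1 2 [D.decomp]
  simp only [transpose_mul, transpose_transpose, Matrix.mul_assoc]
  rw [← Matrix.mul_assoc D.Vᵀ, D.hV, Matrix.one_mul]

lemma vnorm_transpose_mulVec (x : Fin p → ℝ) :
    vnorm (Aᵀ *ᵥ x) = vnorm fun l : Fin p => D.sv l * (D.Uᵀ *ᵥ x) l := by
  refine (sq_eq_sq₀ (vnorm_nonneg _) (vnorm_nonneg _)).1 ?_
  rw [vnorm_transpose_mulVec_sq, D.mul_transpose_eq, Matrix.mul_assoc, ← mulVec_mulVec,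
    ← mulVec_mulVec, ← dotProduct_transpose_mulVec, dotProduct_comm, vnorm_sq]
  simp only [dotProduct, mulVec_diagonal]
  exact Finset.sum_congr rfl fun l _ => by ring

lemma vnorm_transpose_mulVec_le {r : ℕ} {x : Fin p → ℝ} (hx : projr D.U r *ᵥ x = 0) :
    vnorm (Aᵀ *ᵥ x) ≤ D.sv r * vnorm x := by
  rw [D.vnorm_transpose_mulVec, ← D.vnorm_U_transpose_mulVec x]
  refine vnorm_le_mul_vnorm (D.sv_nonneg r) fun l => ?_
  rw [abs_mul, abs_of_nonneg (D.sv_nonneg l)]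
  rcases lt_or_ge (l : ℕ) r with hl | hl
  · have hzero : (D.Uᵀ *ᵥ x) l = 0 := by
      rw [← if_pos hl (t := (D.Uᵀ *ᵥ x) l) (e := 0),
        ← transpose_mulVec_projr_mulVec_apply D.hU, hx, mulVec_zero, Pi.zero_apply]
    rw [hzero, abs_zero, mul_zero, mul_zero]
  · exact mul_le_mul_of_nonneg_right (D.sv_anti r l hl) (abs_nonneg _)

lemma sv_mul_vnorm_le {j : ℕ} {x : Fin p → ℝ}
    (hx : ∀ l : Fin p, j < (l : ℕ) → (D.Uᵀ *ᵥ x) l = 0) :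
    D.sv j * vnorm x ≤ vnorm (Aᵀ *ᵥ x) := by
  have hscale : vnorm (fun l => D.sv j * (D.Uᵀ *ᵥ x) l) = D.sv j * vnorm x := by
    rw [← D.vnorm_U_transpose_mulVec x]
    refine (sq_eq_sq₀ (vnorm_nonneg _) (mul_nonneg (D.sv_nonneg j) (vnorm_nonneg _))).1 ?_
    simp only [mul_pow, vnorm_sq, Finset.mul_sum]
  rw [← hscale, D.vnorm_transpose_mulVec, ← one_mul (vnorm fun l : Fin p => D.sv l * _)]
  refine vnorm_le_mul_vnorm zero_le_one fun l => ?_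
  rw [one_mul, abs_mul, abs_mul, abs_of_nonneg (D.sv_nonneg j), abs_of_nonneg (D.sv_nonneg l)]
  rcases lt_or_ge j (l : ℕ) with hl | hl
  · rw [hx l hl, abs_zero, mul_zero, mul_zero]
  · exact mul_le_mul_of_nonneg_right (D.sv_anti l j hl) (abs_nonneg _)

variable {B : Matrix (Fin p) (Fin m) ℝ} (D' : SVDData p m B)

lemma exists_sv_le_vnorm_transpose_mulVec (j : Fin p) :
    ∃ x, vnorm x = 1 ∧ D.sv j ≤ vnorm (Aᵀ *ᵥ x) ∧ projr D'.U j *ᵥ x = 0 := by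
  obtain ⟨x, hx, hlow, hhigh⟩ := exists_vnorm_eq_one_mulVec_apply_eq_zero D'.Uᵀ D.Uᵀ j
  refine ⟨x, hx, ?_, projr_mulVec_eq_zero hlow⟩
  simpa only [hx, mul_one] using D.sv_mul_vnorm_le (j := j) hhigh

lemma mul_sv_le_sv_add_of_forall {a M : ℝ} (ha : 0 ≤ a) (hM : 0 ≤ M)
    (h : ∀ x, a * vnorm (Aᵀ *ᵥ x) ≤ vnorm (Bᵀ *ᵥ x) + M * vnorm x) (j : ℕ) :
    a * D.sv j ≤ D'.sv j + M := by
  rcases lt_or_ge j p with hj | hj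
  · obtain ⟨x, hx, hA, hproj⟩ := D.exists_sv_le_vnorm_transpose_mulVec D' ⟨j, hj⟩
    have hB := D'.vnorm_transpose_mulVec_le hproj
    have hx' := h x
    rw [hx, mul_one] at hB hx'
    exact (mul_le_mul_of_nonneg_left hA ha).trans (hx'.trans (add_le_add_left hB M))
  · rw [D.sv_zero j ((min_le_left p n).trans hj), mul_zero]
    exact add_nonneg (D'.sv_nonneg j) hM

/-- The matrix `Σ_{1:r}⁻¹ U_{1:r}ᵀ`, padded with zero rows to stay square: it rescales the leading
`r` left singular directions of `A` to unit singular value and kills the others. -/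
def whiten (r : ℕ) : Matrix (Fin p) (Fin p) ℝ :=
  diagonal (fun l : Fin p => if (l : ℕ) < r then (D.sv l)⁻¹ else 0) * D.Uᵀ

variable (r : ℕ)

lemma whiten_mulVec_apply (y : Fin p → ℝ) (l : Fin p) :
    (D.whiten r *ᵥ y) l = if (l : ℕ) < r then (D.sv l)⁻¹ * (D.Uᵀ *ᵥ y) l else 0 := by
  rw [whiten, ← mulVec_mulVec, mulVec_diagonal, ite_mul, zero_mul]

lemma U_transpose_mulVec_whiten_transpose_mulVec_apply (v : Fin p → ℝ) (l : Fin p) :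
    (D.Uᵀ *ᵥ ((D.whiten r)ᵀ *ᵥ v)) l = if (l : ℕ) < r then (D.sv l)⁻¹ * v l else 0 := by
  rw [whiten, transpose_mul, transpose_transpose, diagonal_transpose, mulVec_mulVec,
    ← Matrix.mul_assoc, D.hU, Matrix.one_mul, mulVec_diagonal, ite_mul, zero_mul]

lemma vnorm_transpose_mulVec_whiten_transpose_mulVec_le (v : Fin p → ℝ) :
    vnorm (Aᵀ *ᵥ ((D.whiten r)ᵀ *ᵥ v)) ≤ vnorm v := by
  rw [D.vnorm_transpose_mulVec, ← one_mul (vnorm v)]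
  refine vnorm_le_mul_vnorm zero_le_one fun l => ?_
  rw [U_transpose_mulVec_whiten_transpose_mulVec_apply, mul_ite, ← mul_assoc, mul_zero]
  split_ifs
  · rw [abs_mul, abs_of_nonneg (mul_nonneg (D.sv_nonneg l) (inv_nonneg.2 (D.sv_nonneg l)))]
    exact mul_le_mul_of_nonneg_right mul_inv_le_one (abs_nonneg _)
  · rw [abs_zero]
    exact mul_nonneg zero_le_one (abs_nonneg _)

variable {r}

lemma inv_sv_le_inv_sv (hr : 0 < D.sv (r - 1)) {l : ℕ} (hl : l < r) :
    (D.sv l)⁻¹ ≤ (D.sv (r - 1))⁻¹ :=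
  inv_anti₀ hr (D.sv_anti l (r - 1) (Nat.le_sub_one_of_lt hl))

lemma abs_ite_inv_sv_mul_le (hr : 0 < D.sv (r - 1)) (l : ℕ) (a : ℝ) :
    |if l < r then (D.sv l)⁻¹ * a else 0| ≤ (D.sv (r - 1))⁻¹ * |if l < r then a else 0| := by
  split_ifs with hl
  · rw [abs_mul, abs_of_nonneg (inv_nonneg.2 (D.sv_nonneg l))]
    exact mul_le_mul_of_nonneg_right (D.inv_sv_le_inv_sv hr hl) (abs_nonneg a)
  · rw [abs_zero, mul_zero]

lemma vnorm_whiten_transpose_mulVec_le (hr : 0 < D.sv (r - 1)) (v : Fin p → ℝ) :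
    vnorm ((D.whiten r)ᵀ *ᵥ v) ≤ (D.sv (r - 1))⁻¹ * vnorm v := by
  rw [← D.vnorm_U_transpose_mulVec]
  refine vnorm_le_mul_vnorm (inv_nonneg.2 hr.le) fun l => ?_
  rw [U_transpose_mulVec_whiten_transpose_mulVec_apply]
  refine (D.abs_ite_inv_sv_mul_le hr l (v l)).trans
    (mul_le_mul_of_nonneg_left ?_ (inv_nonneg.2 hr.le))
  split_ifs
  exacts [le_rfl, abs_zero.trans_le (abs_nonneg _)]

lemma vnorm_whiten_mulVec_le (hr : 0 < D.sv (r - 1)) (y : Fin p → ℝ) :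
    vnorm (D.whiten r *ᵥ y) ≤ (D.sv (r - 1))⁻¹ * vnorm (projr D.U r *ᵥ y) := by
  rw [vnorm_projr_mulVec D.hU]
  refine vnorm_le_mul_vnorm (inv_nonneg.2 hr.le) fun l => ?_
  rw [whiten_mulVec_apply, coordProj_mulVec_apply]
  exact D.abs_ite_inv_sv_mul_le hr l _

end SVDData

end SingularValues

section RankOneUpdate

variable {m n p : ℕ} {A : Matrix (Fin p) (Fin n) ℝ} {X : Matrix (Fin p) (Fin m) ℝ}
  {y : Fin p → ℝ}

lemma vnorm_transpose_mulVec_sq_of_rank_one (h : X * Xᵀ = A * Aᵀ + vecMulVec y y)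
    (x : Fin p → ℝ) : vnorm (Xᵀ *ᵥ x) ^ 2 = vnorm (Aᵀ *ᵥ x) ^ 2 + (y ⬝ᵥ x) ^ 2 := by
  rw [vnorm_transpose_mulVec_sq, vnorm_transpose_mulVec_sq, h, add_mulVec, dotProduct_add,
    vecMulVec_mulVec, dotProduct_smul, dotProduct_comm x y, op_smul_eq_mul, sq]

variable (D : SVDData p n A) (D' : SVDData p m X)

lemma sv_sq_sub_sv_sq_mul_apply (h : X * Xᵀ = A * Aᵀ + vecMulVec y y) (l j : Fin p) :
    (D'.sv l ^ 2 - D.sv j ^ 2) * (D'.Uᵀ * D.U) l j = (D'.Uᵀ *ᵥ y) l * (D.Uᵀ *ᵥ y) j := by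
  have hX : D'.Uᵀ * (X * Xᵀ) * D.U =
      diagonal (fun l : Fin p => D'.sv l ^ 2) * (D'.Uᵀ * D.U) := by
    rw [D'.mul_transpose_eq, ← Matrix.mul_assoc, ← Matrix.mul_assoc, D'.hU, Matrix.one_mul,
      Matrix.mul_assoc]
  have hA : D'.Uᵀ * (A * Aᵀ) * D.U =
      D'.Uᵀ * D.U * diagonal (fun l : Fin p => D.sv l ^ 2) := by
    rw [D.mul_transpose_eq, Matrix.mul_assoc, Matrix.mul_assoc _ D.Uᵀ, D.hU, Matrix.mul_one,
      Matrix.mul_assoc]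
  have hentry := congrFun₂ hX l j
  rw [h, Matrix.mul_add, Matrix.add_mul, hA, mul_vecMulVec, vecMulVec_mul, Matrix.add_apply,
    mul_diagonal, diagonal_mul, vecMulVec_apply, ← mulVec_transpose] at hentry
  linear_combination -hentry

lemma sv_sq_le_of_rank_one (h : X * Xᵀ = A * Aᵀ + vecMulVec y y) (r : ℕ) :
    D'.sv r ^ 2 ≤ D.sv r ^ 2 + vnorm ((1 - projr D.U r) *ᵥ y) ^ 2 := by
  rcases lt_or_ge r p with hr | hr
  · obtain ⟨x, hx, hX, hproj⟩ := D'.exists_sv_le_vnorm_transpose_mulVec D ⟨r, hr⟩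
    have hA : vnorm (Aᵀ *ᵥ x) ≤ D.sv r := by
      simpa only [hx, mul_one] using D.vnorm_transpose_mulVec_le hproj
    have hfix : (1 - projr D.U r) *ᵥ x = x := by rw [sub_mulVec, one_mulVec, hproj, sub_zero]
    have hy : |y ⬝ᵥ x| ≤ vnorm ((1 - projr D.U r) *ᵥ y) := by
      rw [← hfix, ← dotProduct_transpose_mulVec, transpose_one_sub_projr, dotProduct_comm,
        ← mul_one (vnorm _), ← hx]
      exact abs_dotProduct_le _ _
    calc D'.sv r ^ 2 ≤ vnorm (Xᵀ *ᵥ x) ^ 2 := pow_le_pow_left₀ (D'.sv_nonneg r) hX 2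
      _ = vnorm (Aᵀ *ᵥ x) ^ 2 + |y ⬝ᵥ x| ^ 2 := by
          rw [vnorm_transpose_mulVec_sq_of_rank_one h, sq_abs]
      _ ≤ _ := add_le_add (pow_le_pow_left₀ (vnorm_nonneg _) hA 2)
          (pow_le_pow_left₀ (abs_nonneg _) hy 2)
  · rw [D'.sv_zero r ((min_le_left p m).trans hr), zero_pow two_ne_zero]
    positivity

-- Below the leading singular values, the components of `Π y` and of `y` along a left singular
-- vector of `X` have opposite signs, so removing `Π y` from `y` only lengthens the component.
lemma abs_U_transpose_mulVec_apply_le_of_rank_one (h : X * Xᵀ = A * Aᵀ + vecMulVec y y) {r : ℕ}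
    {l : Fin p} (hl : ∀ j : Fin p, (j : ℕ) < r → D'.sv l ≤ D.sv j) :
    |(D'.Uᵀ *ᵥ y) l| ≤ |(D'.Uᵀ *ᵥ ((1 - projr D.U r) *ᵥ y)) l| := by
  have hexpand : (D'.Uᵀ *ᵥ (projr D.U r *ᵥ y)) l =
      ∑ j, (D'.Uᵀ * D.U) l j * if (j : ℕ) < r then (D.Uᵀ *ᵥ y) j else 0 := by
    simp only [← transpose_mulVec_projr_mulVec_apply D.hU]
    change _ = ((D'.Uᵀ * D.U) *ᵥ (D.Uᵀ *ᵥ (projr D.U r *ᵥ y))) l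
    rw [mulVec_mulVec (M := D'.Uᵀ * D.U), Matrix.mul_assoc, mul_eq_one_comm.1 D.hU,
      Matrix.mul_one]
  have hsign : (D'.Uᵀ *ᵥ y) l * (D'.Uᵀ *ᵥ (projr D.U r *ᵥ y)) l ≤ 0 := by
    rw [hexpand, Finset.mul_sum]
    refine Finset.sum_nonpos fun j _ => ?_
    split_ifs with hj
    · calc (D'.Uᵀ *ᵥ y) l * ((D'.Uᵀ * D.U) l j * (D.Uᵀ *ᵥ y) j)
          = (D'.sv l ^ 2 - D.sv j ^ 2) * (D'.Uᵀ * D.U) l j ^ 2 := by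
            linear_combination -(D'.Uᵀ * D.U) l j * sv_sq_sub_sv_sq_mul_apply D D' h l j
        _ ≤ 0 := mul_nonpos_of_nonpos_of_nonneg
            (sub_nonpos.2 (pow_le_pow_left₀ (D'.sv_nonneg l) (hl j hj) 2)) (sq_nonneg _)
    · rw [mul_zero, mul_zero]
  refine sq_le_sq.1 ?_
  rw [sub_mulVec, one_mulVec, mulVec_sub, Pi.sub_apply]
  nlinarith [sq_nonneg ((D'.Uᵀ *ᵥ (projr D.U r *ᵥ y)) l)]

lemma mul_le_sq_sub_sq {a c s t : ℝ} (ha : 0 < a) (h : t ^ 2 + c * a ≤ a ^ 2) (has : a ≤ s) :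
    c * s ≤ s ^ 2 - t ^ 2 := by
  have hca : c ≤ a := le_of_mul_le_mul_right (by nlinarith [sq_nonneg t]) ha
  nlinarith [mul_nonneg (sub_nonneg.2 has) (add_nonneg (ha.le.trans has) (sub_nonneg.2 hca))]

lemma mul_abs_apply_le_of_rank_one (h : X * Xᵀ = A * Aᵀ + vecMulVec y y) {r : ℕ} {c : ℝ}
    (hc : 0 < c) (hr : 0 < D.sv (r - 1))
    (hgap : D.sv r ^ 2 + vnorm ((1 - projr D.U r) *ᵥ y) ^ 2 + c * D.sv (r - 1) ≤
      D.sv (r - 1) ^ 2) {l j : Fin p} (hl : r ≤ l) (hj : (j : ℕ) < r) :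
    c * |(D'.Uᵀ * D.U) l j| ≤
      |(D'.Uᵀ *ᵥ ((1 - projr D.U r) *ᵥ y)) l| * |(D.whiten r *ᵥ y) j| := by
  have hτ : D'.sv l ^ 2 + c * D.sv (r - 1) ≤ D.sv (r - 1) ^ 2 := by
    have hlr := pow_le_pow_left₀ (D'.sv_nonneg l) (D'.sv_anti r l hl) 2
    linarith [sv_sq_le_of_rank_one D D' h r]
  have hanti : ∀ i : Fin p, (i : ℕ) < r → D.sv (r - 1) ≤ D.sv i := fun i hi =>
    D.sv_anti i (r - 1) (Nat.le_sub_one_of_lt hi)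
  have hσ : 0 < D.sv j := hr.trans_le (hanti j hj)
  have hτσ : D'.sv l ≤ D.sv (r - 1) :=
    (sq_le_sq₀ (D'.sv_nonneg l) hr.le).1 (by linarith [mul_pos hc hr])
  have hgap' : c * D.sv j ≤ |D'.sv l ^ 2 - D.sv j ^ 2| := by
    rw [abs_sub_comm]
    exact (mul_le_sq_sub_sq hr hτ (hanti j hj)).trans (le_abs_self _)
  have hprod : c * D.sv j * |(D'.Uᵀ * D.U) l j| ≤
      |(D'.Uᵀ *ᵥ ((1 - projr D.U r) *ᵥ y)) l| * |(D.Uᵀ *ᵥ y) j| :=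
    calc c * D.sv j * |(D'.Uᵀ * D.U) l j|
        ≤ |D'.sv l ^ 2 - D.sv j ^ 2| * |(D'.Uᵀ * D.U) l j| :=
          mul_le_mul_of_nonneg_right hgap' (abs_nonneg _)
      _ = |(D'.Uᵀ *ᵥ y) l| * |(D.Uᵀ *ᵥ y) j| := by
          rw [← abs_mul, sv_sq_sub_sv_sq_mul_apply D D' h, abs_mul]
      _ ≤ _ := mul_le_mul_of_nonneg_right
          (abs_U_transpose_mulVec_apply_le_of_rank_one D D' h fun i hi => hτσ.trans (hanti i hi))
          (abs_nonneg _)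
  rw [D.whiten_mulVec_apply, if_pos hj, abs_mul, abs_of_pos (inv_pos.2 hσ)]
  refine le_of_mul_le_mul_right ?_ hσ
  calc c * |(D'.Uᵀ * D.U) l j| * D.sv j = c * D.sv j * |(D'.Uᵀ * D.U) l j| := by ring
    _ ≤ _ := hprod
    _ = _ := by field_simp

lemma mul_fnorm_projr_sub_projr_le_of_rank_one (h : X * Xᵀ = A * Aᵀ + vecMulVec y y) {r : ℕ}
    {c : ℝ} (hc : 0 < c) (hr : 0 < D.sv (r - 1))
    (hgap : D.sv r ^ 2 + vnorm ((1 - projr D.U r) *ᵥ y) ^ 2 + c * D.sv (r - 1) ≤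
      D.sv (r - 1) ^ 2) :
    c * fnorm (projr D'.U r - projr D.U r) ≤
      √2 * (vnorm ((1 - projr D.U r) *ᵥ y) * vnorm (D.whiten r *ᵥ y)) := by
  rw [fnorm_projr_sub_projr D'.hU D.hU, mul_left_comm,
    ← D'.vnorm_U_transpose_mulVec ((1 - projr D.U r) *ᵥ y)]
  refine mul_le_mul_of_nonneg_left (mul_fnorm_le_of_forall_abs_le hc.le fun l j => ?_)
    (Real.sqrt_nonneg 2)
  rw [transpose_mul_one_sub_projr_mul_projr_mul_apply D'.hU D.hU]
  split_ifs with hl hj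
  · simp only [abs_zero, mul_zero]
    positivity
  · exact mul_abs_apply_le_of_rank_one D D' h hc hr hgap (not_lt.1 hl) hj
  · simp only [abs_zero, mul_zero]
    positivity

end RankOneUpdate

section LeaveOneOut

variable {n p : ℕ}

/-- The matrix `X_{-i}`, obtained from `X` by deleting its `i`-th column. -/
abbrev dropCol (X : Matrix (Fin p) (Fin (n + 1)) ℝ) (i : Fin (n + 1)) :
    Matrix (Fin p) (Fin n) ℝ :=
  X.submatrix id i.succAbove

lemma mul_transpose_eq_dropCol_add (X : Matrix (Fin p) (Fin (n + 1)) ℝ) (i : Fin (n + 1)) :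
    X * Xᵀ = dropCol X i * (dropCol X i)ᵀ + vecMulVec (X.col i) (X.col i) := by
  ext a b
  simp only [Matrix.add_apply, mul_apply, transpose_apply, submatrix_apply, id, vecMulVec_apply,
    col_apply]
  rw [Fin.sum_univ_succAbove _ i, add_comm]

lemma vnorm_dropCol_transpose_mulVec_le (X : Matrix (Fin p) (Fin (n + 1)) ℝ) (i : Fin (n + 1))
    (x : Fin p → ℝ) : vnorm ((dropCol X i)ᵀ *ᵥ x) ≤ vnorm (Xᵀ *ᵥ x) := by
  have h := vnorm_transpose_mulVec_sq_of_rank_one (mul_transpose_eq_dropCol_add X i) x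
  exact (sq_le_sq₀ (vnorm_nonneg _) (vnorm_nonneg _)).1
    (h.symm ▸ le_add_of_nonneg_right (sq_nonneg _))

lemma vnorm_dropCol_transpose_mulVec_le_opnorm_mul (E : Matrix (Fin p) (Fin (n + 1)) ℝ)
    (i : Fin (n + 1)) (x : Fin p → ℝ) :
    vnorm ((dropCol E i)ᵀ *ᵥ x) ≤ opnorm E * vnorm x := by
  rw [← opnorm_transpose]
  exact (vnorm_dropCol_transpose_mulVec_le E i x).trans (vnorm_mulVec_le_opnorm_mul Eᵀ x)

lemma dropCol_add_transpose_mulVec (P E : Matrix (Fin p) (Fin (n + 1)) ℝ) (i : Fin (n + 1))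
    (x : Fin p → ℝ) : (dropCol (P + E) i)ᵀ *ᵥ x = (dropCol P i)ᵀ *ᵥ x + (dropCol E i)ᵀ *ᵥ x := by
  rw [← add_mulVec]
  rfl

/-- The leverage score `P_iᵀ (P Pᵀ)⁺ P_i` of the `i`-th column of `P` is at most `ρ⁻²`, stated
without a pseudo-inverse: no direction sees column `i` as more than a fraction `ρ⁻¹` of `P`. -/
def LowLeverage (P : Matrix (Fin p) (Fin n) ℝ) (i : Fin n) (ρ : ℝ) : Prop :=
  ∀ x, ρ * |P.col i ⬝ᵥ x| ≤ vnorm (Pᵀ *ᵥ x)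

variable {P E : Matrix (Fin p) (Fin (n + 1)) ℝ} {i : Fin (n + 1)} {ρ : ℝ}

lemma one_sub_inv_sq_mul_vnorm_le_dropCol (hρ : 0 < ρ)
    (hlev : LowLeverage P i ρ) (x : Fin p → ℝ) :
    (1 - ρ⁻¹ ^ 2) * vnorm (Pᵀ *ᵥ x) ≤ vnorm ((dropCol P i)ᵀ *ᵥ x) := by
  have hsplit := vnorm_transpose_mulVec_sq_of_rank_one (mul_transpose_eq_dropCol_add P i) x
  have hcol : (P.col i ⬝ᵥ x) ^ 2 ≤ ρ⁻¹ ^ 2 * vnorm (Pᵀ *ᵥ x) ^ 2 := by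
    rw [← sq_abs, ← mul_pow]
    exact pow_le_pow_left₀ (abs_nonneg _) ((le_inv_mul_iff₀ hρ).2 (hlev x)) 2
  have hdrop := vnorm_dropCol_transpose_mulVec_le P i x
  rcases (vnorm_nonneg (Pᵀ *ᵥ x)).eq_or_lt with h0 | hpos
  · rw [← h0, mul_zero]
    exact vnorm_nonneg _
  · refine le_of_mul_le_mul_right ?_ hpos
    nlinarith [mul_le_mul_of_nonneg_left hdrop (vnorm_nonneg ((dropCol P i)ᵀ *ᵥ x))]

lemma one_sub_inv_sq_mul_vnorm_le (hρ : 0 < ρ)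
    (hlev : LowLeverage P i ρ) (x : Fin p → ℝ) :
    (1 - ρ⁻¹ ^ 2) * vnorm (Pᵀ *ᵥ x) ≤
      vnorm ((dropCol (P + E) i)ᵀ *ᵥ x) + opnorm E * vnorm x := by
  refine (one_sub_inv_sq_mul_vnorm_le_dropCol hρ hlev x).trans ?_
  refine (vnorm_le_vnorm_add_add _ ((dropCol E i)ᵀ *ᵥ x)).trans ?_
  rw [← dropCol_add_transpose_mulVec]
  exact add_le_add_right (vnorm_dropCol_transpose_mulVec_le_opnorm_mul E i x) _

variable (DP : SVDData p (n + 1) P) (D : SVDData p n (dropCol (P + E) i))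

lemma sv_dropCol_add_le (j : ℕ) : D.sv j ≤ DP.sv j + opnorm E := by
  rw [← one_mul (D.sv j)]
  refine D.mul_sv_le_sv_add_of_forall DP zero_le_one (opnorm_nonneg E) (fun x => ?_) j
  rw [one_mul, dropCol_add_transpose_mulVec]
  exact (vnorm_add_le _ _).trans (add_le_add (vnorm_dropCol_transpose_mulVec_le P i x)
    (vnorm_dropCol_transpose_mulVec_le_opnorm_mul E i x))

lemma one_sub_inv_sq_mul_sv_le (hρ : 1 ≤ ρ)
    (hlev : LowLeverage P i ρ) (j : ℕ) :
    (1 - ρ⁻¹ ^ 2) * DP.sv j ≤ D.sv j + opnorm E := by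
  have hρ' : 0 < ρ := zero_lt_one.trans_le hρ
  refine DP.mul_sv_le_sv_add_of_forall D ?_ (opnorm_nonneg E)
    (one_sub_inv_sq_mul_vnorm_le hρ' hlev) j
  exact sub_nonneg.2 (pow_le_one₀ (inv_nonneg.2 hρ'.le) (inv_le_one_of_one_le₀ hρ))

lemma one_sub_inv_sq_mul_mul_dotProduct_le (hρ : 1 ≤ ρ)
    (hlev : LowLeverage P i ρ) (x : Fin p → ℝ) :
    (1 - ρ⁻¹ ^ 2) * ρ * (P.col i ⬝ᵥ x) ≤
      vnorm ((dropCol (P + E) i)ᵀ *ᵥ x) + opnorm E * vnorm x := by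
  have hρ' : 0 < ρ := zero_lt_one.trans_le hρ
  refine le_trans ?_ (one_sub_inv_sq_mul_vnorm_le hρ' hlev x)
  rw [mul_assoc]
  refine mul_le_mul_of_nonneg_left ?_
    (sub_nonneg.2 (pow_le_one₀ (inv_nonneg.2 hρ'.le) (inv_le_one_of_one_le₀ hρ)))
  exact (mul_le_mul_of_nonneg_left (le_abs_self _) hρ'.le).trans (hlev x)

lemma mul_vnorm_one_sub_projr_mulVec_col_le (hρ : 1 ≤ ρ)
    (hlev : LowLeverage P i ρ) (r : ℕ) :
    (1 - ρ⁻¹ ^ 2) * ρ * vnorm ((1 - projr D.U r) *ᵥ P.col i) ≤ D.sv r + opnorm E := by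
  have hK : 0 ≤ D.sv r + opnorm E := add_nonneg (D.sv_nonneg r) (opnorm_nonneg E)
  refine mul_vnorm_mulVec_le_of_forall _
    (one_sub_inv_sq_mul_mul_dotProduct_le (E := E) hρ hlev) (fun v => ?_) hK
  rw [transpose_one_sub_projr]
  refine (add_le_add_left (D.vnorm_transpose_mulVec_le
    (projr_mulVec_one_sub_projr_mulVec D.hU r v)) _).trans ?_
  rw [← add_mul]
  exact mul_le_mul_of_nonneg_left (vnorm_one_sub_projr_mulVec_le D.hU r v) hK

lemma mul_vnorm_whiten_mulVec_col_le (hρ : 1 ≤ ρ)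
    (hlev : LowLeverage P i ρ) {r : ℕ} (hr : 0 < D.sv (r - 1)) :
    (1 - ρ⁻¹ ^ 2) * ρ * vnorm (D.whiten r *ᵥ P.col i) ≤
      1 + opnorm E * (D.sv (r - 1))⁻¹ := by
  refine mul_vnorm_mulVec_le_of_forall _
    (one_sub_inv_sq_mul_mul_dotProduct_le (E := E) hρ hlev) (fun v => ?_)
    (add_nonneg zero_le_one (mul_nonneg (opnorm_nonneg E) (inv_nonneg.2 hr.le)))
  rw [add_mul, one_mul, mul_assoc]
  exact add_le_add (D.vnorm_transpose_mulVec_whiten_transpose_mulVec_le r v)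
    (mul_le_mul_of_nonneg_left (D.vnorm_whiten_transpose_mulVec_le hr v) (opnorm_nonneg E))

end LeaveOneOut

section Constants

variable {n p : ℕ} {P E : Matrix (Fin p) (Fin (n + 1)) ℝ} {i : Fin (n + 1)} {ρ M : ℝ}
  (DP : SVDData p (n + 1) P) (D : SVDData p n (dropCol (P + E) i))

lemma eight_ninths_le_one_sub_inv_sq (hρ : 3 ≤ ρ) : 8 / 9 ≤ 1 - ρ⁻¹ ^ 2 := by
  have h : ρ⁻¹ ^ 2 ≤ (3⁻¹ : ℝ) ^ 2 :=
    pow_le_pow_left₀ (inv_nonneg.2 (by linarith)) (inv_anti₀ three_pos hρ) 2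
  linarith

lemma four_fifths_mul_sv_le (hρ : 3 ≤ ρ) (hlev : LowLeverage P i ρ)
    {j : ℕ} (hE : 16 * opnorm E ≤ DP.sv j) : 4 / 5 * DP.sv j ≤ D.sv j := by
  have h := one_sub_inv_sq_mul_sv_le DP D (by linarith) hlev j
  have hδ := mul_le_mul_of_nonneg_right (eight_ninths_le_one_sub_inv_sq hρ) (DP.sv_nonneg j)
  linarith [DP.sv_nonneg j]

lemma eleven_fifteenths_mul_sv_sub_sv_le (hρ : 3 ≤ ρ)
    (hlev : LowLeverage P i ρ) (hE : opnorm E ≤ M) {r : ℕ}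
    (hsv : DP.sv r ≤ ρ * M) (hgap : 16 * M ≤ DP.sv (r - 1) - DP.sv r) :
    11 / 15 * (DP.sv (r - 1) - DP.sv r) ≤ D.sv (r - 1) - D.sv r := by
  have hM : 0 ≤ M := (opnorm_nonneg E).trans hE
  have hlow := one_sub_inv_sq_mul_sv_le DP D (by linarith) hlev (r - 1)
  have hup := sv_dropCol_add_le DP D r
  have htail : ρ⁻¹ ^ 2 * DP.sv r ≤ M / 3 :=
    calc ρ⁻¹ ^ 2 * DP.sv r ≤ ρ⁻¹ ^ 2 * (ρ * M) := mul_le_mul_of_nonneg_left hsv (sq_nonneg _)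
      _ = M / ρ := by field_simp
      _ ≤ M / 3 := div_le_div_of_nonneg_left hM three_pos hρ
  nlinarith [mul_le_mul_of_nonneg_right (eight_ninths_le_one_sub_inv_sq hρ)
    (show 0 ≤ DP.sv (r - 1) - DP.sv r by linarith)]

lemma vnorm_one_sub_projr_mulVec_col_le_three_mul (hρ : 3 ≤ ρ)
    (hlev : LowLeverage P i ρ) (hE : opnorm E ≤ M) {r : ℕ}
    (hsv : DP.sv r ≤ ρ * M) : vnorm ((1 - projr D.U r) *ᵥ (P + E).col i) ≤ 3 * M := by
  have hM : 0 ≤ M := (opnorm_nonneg E).trans hE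
  have hsignal : ρ * vnorm ((1 - projr D.U r) *ᵥ P.col i) ≤ ρ * (2 * M) := by
    have h := mul_vnorm_one_sub_projr_mulVec_col_le D (by linarith) hlev r
    have hup := sv_dropCol_add_le DP D r
    nlinarith [mul_le_mul_of_nonneg_right (eight_ninths_le_one_sub_inv_sq hρ)
      (mul_nonneg (by linarith : 0 ≤ ρ) (vnorm_nonneg ((1 - projr D.U r) *ᵥ P.col i))),
      mul_le_mul_of_nonneg_right hρ hM]
  calc vnorm ((1 - projr D.U r) *ᵥ (P + E).col i)
      ≤ vnorm ((1 - projr D.U r) *ᵥ P.col i) + vnorm ((1 - projr D.U r) *ᵥ E.col i) := by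
        rw [show (P + E).col i = P.col i + E.col i from rfl, mulVec_add]
        exact vnorm_add_le _ _
    _ ≤ 2 * M + M := add_le_add (le_of_mul_le_mul_left hsignal (by linarith))
        ((vnorm_one_sub_projr_mulVec_le D.hU r _).trans ((vnorm_col_le_opnorm E i).trans hE))
    _ = 3 * M := by ring

lemma vnorm_whiten_mulVec_col_le_five_fourths_mul (hρ : 3 ≤ ρ)
    (hlev : LowLeverage P i ρ) {r : ℕ} (hr : 0 < DP.sv (r - 1))
    (hE : 16 * opnorm E ≤ DP.sv (r - 1)) :
    vnorm (D.whiten r *ᵥ (P + E).col i) ≤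
      5 / 4 * (ρ⁻¹ + vnorm (projr D.U r *ᵥ E.col i) / DP.sv (r - 1)) := by
  have hsv := four_fifths_mul_sv_le DP D hρ hlev hE
  have hpos : 0 < D.sv (r - 1) := by linarith
  have hsignal : vnorm (D.whiten r *ᵥ P.col i) ≤ 5 / 4 * ρ⁻¹ := by
    have h := mul_vnorm_whiten_mulVec_col_le D (by linarith) hlev hpos
    have hratio : opnorm E * (D.sv (r - 1))⁻¹ ≤ 1 / 12 := by
      rw [← div_eq_mul_inv, div_le_iff₀ hpos]
      linarith
    rw [← div_eq_mul_inv, le_div_iff₀ (by linarith)]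
    nlinarith [mul_le_mul_of_nonneg_right (eight_ninths_le_one_sub_inv_sq hρ)
      (mul_nonneg (by linarith : 0 ≤ ρ) (vnorm_nonneg (D.whiten r *ᵥ P.col i)))]
  have hnoise : vnorm (D.whiten r *ᵥ E.col i) ≤
      5 / 4 * (vnorm (projr D.U r *ᵥ E.col i) / DP.sv (r - 1)) := by
    refine (D.vnorm_whiten_mulVec_le hpos _).trans ?_
    have hinv : (D.sv (r - 1))⁻¹ ≤ 5 / 4 * (DP.sv (r - 1))⁻¹ := by
      rw [← div_eq_mul_inv, le_div_iff₀ hr, inv_mul_le_iff₀ hpos]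
      linarith
    calc (D.sv (r - 1))⁻¹ * vnorm (projr D.U r *ᵥ E.col i)
        ≤ 5 / 4 * (DP.sv (r - 1))⁻¹ * vnorm (projr D.U r *ᵥ E.col i) :=
          mul_le_mul_of_nonneg_right hinv (vnorm_nonneg _)
      _ = 5 / 4 * (vnorm (projr D.U r *ᵥ E.col i) / DP.sv (r - 1)) := by ring
  rw [show (P + E).col i = P.col i + E.col i from rfl, mulVec_add, mul_add]
  exact (vnorm_add_le _ _).trans (add_le_add hsignal hnoise)

lemma sv_sq_add_vnorm_sq_add_mul_le (hρ : 3 ≤ ρ) (hlev : LowLeverage P i ρ)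
    (hE : opnorm E ≤ M) {r : ℕ} (hsv : DP.sv r ≤ ρ * M)
    (hgap : 16 * M ≤ DP.sv (r - 1) - DP.sv r) :
    D.sv r ^ 2 + vnorm ((1 - projr D.U r) *ᵥ (P + E).col i) ^ 2 +
        2 / 3 * (DP.sv (r - 1) - DP.sv r) * D.sv (r - 1) ≤ D.sv (r - 1) ^ 2 := by
  have hM : 0 ≤ M := (opnorm_nonneg E).trans hE
  have hσ := four_fifths_mul_sv_le DP D hρ hlev (j := r - 1) (by linarith [DP.sv_nonneg r])
  have hσM : 64 / 5 * M ≤ D.sv (r - 1) := by linarith [DP.sv_nonneg r]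
  have hdiff : 11 / 15 * (DP.sv (r - 1) - DP.sv r) * D.sv (r - 1) ≤
      D.sv (r - 1) ^ 2 - D.sv r ^ 2 :=
    calc 11 / 15 * (DP.sv (r - 1) - DP.sv r) * D.sv (r - 1)
        ≤ (D.sv (r - 1) - D.sv r) * (D.sv (r - 1) + D.sv r) :=
          mul_le_mul (eleven_fifteenths_mul_sv_sub_sv_le DP D hρ hlev hE hsv hgap)
            (le_add_of_nonneg_right (D.sv_nonneg r)) (D.sv_nonneg _)
            (sub_nonneg.2 (D.sv_anti (r - 1) r (Nat.sub_le r 1)))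
      _ = D.sv (r - 1) ^ 2 - D.sv r ^ 2 := by ring
  have hres : vnorm ((1 - projr D.U r) *ᵥ (P + E).col i) ^ 2 ≤
      1 / 15 * (DP.sv (r - 1) - DP.sv r) * D.sv (r - 1) :=
    calc vnorm ((1 - projr D.U r) *ᵥ (P + E).col i) ^ 2 ≤ (3 * M) ^ 2 :=
          pow_le_pow_left₀ (vnorm_nonneg _)
            (vnorm_one_sub_projr_mulVec_col_le_three_mul DP D hρ hlev hE hsv) 2
      _ ≤ 1 / 15 * (16 * M) * (64 / 5 * M) := by nlinarith [sq_nonneg M]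
      _ ≤ 1 / 15 * (DP.sv (r - 1) - DP.sv r) * D.sv (r - 1) := by
          gcongr
          linarith
  linarith

lemma mul_fnorm_projr_sub_projr_dropCol_le (DX : SVDData p (n + 1) (P + E)) (hρ : 3 ≤ ρ)
    (hlev : LowLeverage P i ρ) (hE : opnorm E ≤ M) {r : ℕ} (hsv : DP.sv r ≤ ρ * M)
    (hgap : 16 * M < DP.sv (r - 1) - DP.sv r) :
    (DP.sv (r - 1) - DP.sv r) * fnorm (projr DX.U r - projr D.U r) ≤
      8 * M * (ρ⁻¹ + vnorm (projr D.U r *ᵥ E.col i) / DP.sv (r - 1)) := by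
  have hM : 0 ≤ M := (opnorm_nonneg E).trans hE
  have hlam : 16 * M < DP.sv (r - 1) := by linarith [DP.sv_nonneg r]
  have hsig := four_fifths_mul_sv_le DP D hρ hlev (j := r - 1) (by linarith)
  have hres := vnorm_one_sub_projr_mulVec_col_le_three_mul DP D hρ hlev hE hsv
  have hwhite := vnorm_whiten_mulVec_col_le_five_fourths_mul DP D hρ hlev (r := r)
    (by linarith) (by linarith)
  have hsqrt : √2 ≤ 64 / 45 := Real.sqrt_le_iff.2 ⟨by norm_num, by norm_num⟩
  have hpert := mul_fnorm_projr_sub_projr_le_of_rank_one D DX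
    (mul_transpose_eq_dropCol_add (P + E) i) (c := 2 / 3 * (DP.sv (r - 1) - DP.sv r))
    (by linarith) (by linarith) (sv_sq_add_vnorm_sq_add_mul_le DP D hρ hlev hE hsv hgap.le)
  have hprod := mul_le_mul hsqrt
    (mul_le_mul hres hwhite (vnorm_nonneg _) (by linarith))
    (mul_nonneg (vnorm_nonneg _) (vnorm_nonneg _)) (by norm_num)
  linarith

end Constants

theorem mixture_perturbation_general_r_general {p n r : ℕ}
    {P E X : Matrix (Fin p) (Fin (n + 1)) ℝ} (hX : X = P + E) {i : Fin (n + 1)} {ρ M : ℝ}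
    (hρ : 3 ≤ ρ) (hlev : LowLeverage P i ρ) (hE : opnorm E ≤ M) (DP : SVDData p (n + 1) P)
    (hsv : DP.sv r ≤ ρ * M) (hgap : 16 < (DP.sv (r - 1) - DP.sv r) / M)
    (DX : SVDData p (n + 1) X) (DXi : SVDData p n (dropCol X i)) :
    fnorm (projr DX.U r - projr DXi.U r) ≤ 8 / ((DP.sv (r - 1) - DP.sv r) / M) *
      (ρ⁻¹ + vnorm (projr DXi.U r *ᵥ E.col i) / DP.sv (r - 1)) := by
  subst hX
  have hM : 0 < M := ((opnorm_nonneg E).trans hE).lt_of_ne' fun h => by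
    rw [h, div_zero] at hgap
    linarith
  rw [lt_div_iff₀ hM] at hgap
  rw [div_div_eq_mul_div, div_mul_eq_mul_div, le_div_iff₀ (by linarith), mul_comm]
  exact mul_fnorm_projr_sub_projr_dropCol_le DP DXi DX hρ hlev hE hsv hgap

section Clusters

variable {n p k : ℕ}

lemma lowLeverage_sqrt_card {P : Matrix (Fin p) (Fin n) ℝ} {i : Fin n} {s : Finset (Fin n)}
    (hs : ∀ j ∈ s, P.col j = P.col i) : LowLeverage P i √s.card := by
  intro x
  refine (sq_le_sq₀ (mul_nonneg (Real.sqrt_nonneg _) (abs_nonneg _)) (vnorm_nonneg _)).1 ?_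
  calc (√s.card * |P.col i ⬝ᵥ x|) ^ 2 = ∑ j ∈ s, (P.col j ⬝ᵥ x) ^ 2 := by
        rw [mul_pow, Real.sq_sqrt (Nat.cast_nonneg _), sq_abs,
          Finset.sum_congr rfl fun j hj => by rw [hs j hj], Finset.sum_const, nsmul_eq_mul]
    _ ≤ ∑ j, (P.col j ⬝ᵥ x) ^ 2 :=
        Finset.sum_le_univ_sum_of_nonneg fun j => sq_nonneg _
    _ = vnorm (Pᵀ *ᵥ x) ^ 2 := (vnorm_sq _).symm

lemma betaMin_mul_le (z : Fin n → Fin k) (a : Fin k) :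
    betaMin n k z * n ≤ k * (Finset.univ.filter fun j => z j = a).card := by
  rcases n.eq_zero_or_pos with rfl | hn
  · simp only [Nat.cast_zero, mul_zero]
    positivity
  · rw [betaMin, mul_right_comm, div_mul_cancel₀ _ (Nat.cast_ne_zero.2 hn.ne')]
    exact mul_le_mul_of_nonneg_left (ciInf_le (Set.finite_range _).bddBelow a)
      (Nat.cast_nonneg k)

lemma nine_le_card_of_ten_le (z : Fin n → Fin k) (a : Fin k)
    (hβ : 10 ≤ betaMin n k z * n / (k : ℝ) ^ 2) :
    (9 : ℝ) ≤ (Finset.univ.filter fun j => z j = a).card := by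
  have hk : (1 : ℝ) ≤ k := Nat.one_le_cast.2 a.pos
  have hN : 10 * (k : ℝ) ^ 2 ≤ betaMin n k z * n := (le_div_iff₀ (by positivity)).1 hβ
  refine le_of_mul_le_mul_left ?_ (zero_lt_one.trans_le hk)
  nlinarith [betaMin_mul_le z a]

lemma inv_sqrt_card_le (z : Fin n → Fin k) (a : Fin k) (hβ : 0 < betaMin n k z * n) {c : ℝ}
    (hc : 1 ≤ c) : (√(Finset.univ.filter fun j => z j = a).card)⁻¹ ≤
      √(k * c / (betaMin n k z * n)) := by
  have hcard := betaMin_mul_le z a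
  have hpos : (0 : ℝ) < (Finset.univ.filter fun j => z j = a).card :=
    pos_of_mul_pos_right (hβ.trans_le hcard) (Nat.cast_nonneg k)
  rw [← Real.sqrt_inv]
  refine Real.sqrt_le_sqrt ((le_div_iff₀ hβ).2 ((inv_mul_le_iff₀ hpos).2 (hcard.trans ?_)))
  rw [mul_comm]
  exact mul_le_mul_of_nonneg_left (le_mul_of_one_le_right (Nat.cast_nonneg k) hc) hpos.le

end Clusters

/-- **Theorem 7 (singular subspace perturbation in mixture models, general `r`).**
Assume `βn/k² ≥ 10` and, for some `r ∈ [k]`,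
`ρ̃₀ := (λ_r − λ_{r+1}) / max{‖E‖, √(k²/(βn)) λ_{r+1}} > 16`.  Then for every `i`,
`‖Û_{1:r}Û_{1:r}ᵀ − Û_{−i,1:r}Û_{−i,1:r}ᵀ‖_F ≤ (128/ρ̃₀)(√(kr/(βn)) + ‖Û_{−i,1:r}Û_{−i,1:r}ᵀ ε_i‖/λ_r)`. -/
theorem mixture_perturbation_general_r
    (p n k : ℕ) (z : Fin (n + 1) → Fin k) (θ : Fin k → Fin p → ℝ)
    (Pm E X : Matrix (Fin p) (Fin (n + 1)) ℝ)
    (hP : ∀ a j, Pm a j = θ (z j) a) (hX : X = Pm + E)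
    (hβ : 10 ≤ betaMin (n + 1) k z * ((n : ℝ) + 1) / (k : ℝ) ^ 2)
    (DP : SVDData p (n + 1) Pm)
    (r : ℕ) (hr0 : 0 < r) (hrk : r ≤ k)
    (hgap : 16 < (DP.sv (r - 1) - DP.sv r) /
      max (opnorm E)
        (Real.sqrt ((k : ℝ) ^ 2 / (betaMin (n + 1) k z * ((n : ℝ) + 1))) * DP.sv r))
    (DX : SVDData p (n + 1) X) (i : Fin (n + 1))
    (DXi : SVDData p n (X.submatrix id i.succAbove)) :
    fnorm (projr DX.U r - projr DXi.U r) ≤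
      128 / ((DP.sv (r - 1) - DP.sv r) /
          max (opnorm E)
            (Real.sqrt ((k : ℝ) ^ 2 / (betaMin (n + 1) k z * ((n : ℝ) + 1))) * DP.sv r)) *
        (Real.sqrt ((k : ℝ) * r / (betaMin (n + 1) k z * ((n : ℝ) + 1))) +
          vnorm ((projr DXi.U r).mulVec fun a => E a i) / DP.sv (r - 1)) := by
  simp only [show (n : ℝ) + 1 = (n + 1 : ℕ) from (Nat.cast_succ n).symm] at hβ hgap ⊢
  have hN : 0 < betaMin (n + 1) k z * (n + 1 : ℕ) := by
    by_contra! h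
    linarith [div_nonpos_of_nonpos_of_nonneg h (sq_nonneg (k : ℝ))]
  have hcard := nine_le_card_of_ten_le z (z i) hβ
  have hlev : LowLeverage Pm i √(Finset.univ.filter fun j => z j = z i).card :=
    lowLeverage_sqrt_card fun j hj => funext fun a => by
      rw [col_apply, col_apply, hP, hP, (Finset.mem_filter.1 hj).2]
  have hscale := inv_sqrt_card_le z (z i) hN (Nat.one_le_cast.2 (Fin.pos (z i)) : (1 : ℝ) ≤ k)
  rw [← sq] at hscale
  have hsv := (inv_mul_le_iff₀ (by positivity)).1 (le_max_of_le_right (b := opnorm E)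
    (mul_le_mul_of_nonneg_right hscale (DP.sv_nonneg r)))
  refine (mixture_perturbation_general_r_general hX (Real.le_sqrt_of_sq_le (by linarith)) hlev
    (le_max_left _ _) DP hsv hgap DX DXi).trans ?_
  exact mul_le_mul (div_le_div_of_nonneg_right (by norm_num) (by linarith))
    (add_le_add_left (inv_sqrt_card_le z (z i) hN (Nat.one_le_cast.2 hr0)) _)
    (add_nonneg (inv_nonneg.2 (Real.sqrt_nonneg _)) (div_nonneg (vnorm_nonneg _) (DP.sv_nonneg _)))
    (div_nonneg (by norm_num) (by linarith))
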